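/- Cholesky-based online DMD update. Let X ∈ ℝ^{m×n} and R ∈ ℝ^{m×m} be invertible with X Xᵀ = Rᵀ R, let Y ∈ ℝ^{m×n}, and let x, y ∈ ℝ^m. Set A = (Y Xᵀ)(Rᵀ R)⁻¹, p = R⁻¹(R⁻ᵀ x), γ = 1/(1 + xᵀ p), X₁ = [X, x] and Y₁ = [Y, y]. Then: (i) (Y₁ X₁ᵀ)(X₁ X₁ᵀ)⁻¹ = A + γ (y − A x) pᵀ; and (ii) if U ∈ ℝ^{(m+1)×(m+1)} is orthogonal and U · [R; xᵀ] = [R'; 0ᵀ] (i.e. the last row of the product is zero, and R' denotes its first m rows), then R'ᵀ R' = X Xᵀ + x xᵀ = X₁ X₁ᵀ. -/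

import Mathlib

open Matrix

/-- Column vector as an `m × 1` matrix. -/
def colv {m : ℕ} (g : Fin m → ℝ) : Matrix (Fin m) (Fin 1) ℝ :=
  Matrix.of fun i _ => g i

/-- Row vector as a `1 × n` matrix. -/
def rowv {n : ℕ} (g : Fin n → ℝ) : Matrix (Fin 1) (Fin n) ℝ :=
  Matrix.of fun _ j => g j

/-!
Appending a data column changes both `Y Xᵀ` and the Gram matrix `G = X Xᵀ` by a rank-one term. If
the row vector `q` satisfies `q G = vᵀ` and `γ (1 + q u) = 1`, then
`γ (y - C u) q (G + u vᵀ) = γ (1 + q u) (y - C u) vᵀ = (y - C u) vᵀ`, hence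
`(C + γ (y - C u) q) (G + u vᵀ) = C G + y vᵀ`.
Part (i) follows by cancelling `G + u vᵀ`, whose determinant is `det G (1 + vᵀ G⁻¹ u)`; for
`G = Rᵀ R` and `u = v = x` the second factor is `1 + (R⁻ᵀ x)ᵀ (R⁻ᵀ x) > 0`. Part (ii) holds because
`UᵀU = 1` makes `M ↦ U M` preserve the Gram matrix `MᵀM`.
-/

section Semiring

variable {α l m n ι : Type*} [Semiring α]

theorem replicateCol_mul_replicateRow [Fintype ι] [Unique ι] (y : l → α) (x : m → α) :
    replicateCol ι y * replicateRow ι x = vecMulVec y x := by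
  ext
  simp [mul_apply, vecMulVec_apply]

theorem fromCols_replicateCol_mul_transpose [Fintype n] [Fintype ι] [Unique ι]
    (Y : Matrix l n α) (y : l → α) (X : Matrix m n α) (x : m → α) :
    fromCols Y (replicateCol ι y) * (fromCols X (replicateCol ι x))ᵀ =
      Y * Xᵀ + vecMulVec y x := by
  rw [transpose_fromCols, fromCols_mul_fromRows, transpose_replicateCol,
    replicateCol_mul_replicateRow]

theorem transpose_fromRows_replicateRow_mul_self [Fintype n] [Fintype ι] [Unique ι]
    (R : Matrix n m α) (x : m → α) :
    (fromRows R (replicateRow ι x))ᵀ * fromRows R (replicateRow ι x) =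
      Rᵀ * R + vecMulVec x x := by
  rw [transpose_fromRows, fromCols_mul_fromRows, transpose_replicateRow,
    replicateCol_mul_replicateRow]

end Semiring

section CommSemiring

variable {α k l m n ι ι' : Type*} [CommSemiring α]

theorem vecMul_eq_mulVec_of_isSymm [Fintype m] {S : Matrix m m α} (hS : S.IsSymm) (x : m → α) :
    x ᵥ* S = S *ᵥ x := by
  rw [← mulVec_transpose, hS.eq]

theorem transpose_mul_self_mul_of_isometry [Fintype k] [Fintype l] [DecidableEq l]
    {U : Matrix k l α} (hU : Uᵀ * U = 1) (M : Matrix l m α) :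
    (U * M)ᵀ * (U * M) = Mᵀ * M := by
  rw [transpose_mul, Matrix.mul_assoc, ← Matrix.mul_assoc Uᵀ, hU, Matrix.one_mul]

theorem transpose_mul_self_of_isometry_mul_fromRows_replicateRow
    [Fintype k] [Fintype n] [DecidableEq n] [Fintype ι] [DecidableEq ι] [Unique ι] [Fintype ι']
    {U : Matrix (k ⊕ ι') (n ⊕ ι) α} (hU : Uᵀ * U = 1)
    {R : Matrix n m α} {x : m → α} {R' : Matrix k m α}
    (h : U * fromRows R (replicateRow ι x) = fromRows R' 0) :
    R'ᵀ * R' = Rᵀ * R + vecMulVec x x :=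
  calc R'ᵀ * R'
      = (fromRows R' (0 : Matrix ι' m α))ᵀ * fromRows R' (0 : Matrix ι' m α) := by
        rw [transpose_fromRows, fromCols_mul_fromRows, Matrix.mul_zero, add_zero]
    _ = (fromRows R (replicateRow ι x))ᵀ * fromRows R (replicateRow ι x) := by
        rw [← h, transpose_mul_self_mul_of_isometry hU]
    _ = Rᵀ * R + vecMulVec x x := transpose_fromRows_replicateRow_mul_self R x

end CommSemiring

section CommRing

variable {α l m : Type*} [CommRing α] [Fintype m]

theorem add_smul_vecMulVec_mul_add_vecMulVec (C : Matrix l m α) {G : Matrix m m α}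
    {q u v : m → α} (y : l → α) {γ : α} (hq : q ᵥ* G = v) (hγ : γ * (1 + q ⬝ᵥ u) = 1) :
    (C + γ • vecMulVec (y - C *ᵥ u) q) * (G + vecMulVec u v) = C * G + vecMulVec y v := by
  have expand : (C + γ • vecMulVec (y - C *ᵥ u) q) * (G + vecMulVec u v) =
      C * G + vecMulVec (C *ᵥ u) v + (γ * (1 + q ⬝ᵥ u)) • vecMulVec (y - C *ᵥ u) v := by
    rw [Matrix.add_mul, Matrix.mul_add, Matrix.smul_mul, Matrix.mul_add, mul_vecMulVec,
      vecMulVec_mul, hq, vecMulVec_mul_vecMulVec, vecMulVec_smul, mul_smul, add_smul, one_smul]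
  rw [expand, hγ, one_smul, sub_vecMulVec, add_assoc, add_sub_cancel]

variable [DecidableEq m]

theorem det_add_vecMulVec {G : Matrix m m α} (hG : IsUnit G.det) (u v : m → α) :
    (G + vecMulVec u v).det = G.det * (1 + v ⬝ᵥ G⁻¹ *ᵥ u) := by
  rw [vecMulVec_eq Unit, det_add_replicateCol_mul_replicateRow hG, Matrix.mul_assoc,
    ← replicateCol_mulVec, det_unique (n := Unit), Matrix.add_apply, one_apply_eq,
    replicateRow_mul_replicateCol_apply]

theorem mul_inv_add_vecMulVec (B : Matrix l m α) {G : Matrix m m α} (hG : IsUnit G.det)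
    (y : l → α) (u v : m → α) {γ : α} (hγ : γ * (1 + v ⬝ᵥ G⁻¹ *ᵥ u) = 1) :
    (B + vecMulVec y v) * (G + vecMulVec u v)⁻¹ =
      B * G⁻¹ + γ • vecMulVec (y - (B * G⁻¹) *ᵥ u) (v ᵥ* G⁻¹) := by
  have hq : (v ᵥ* G⁻¹) ᵥ* G = v := by rw [vecMul_vecMul, nonsing_inv_mul _ hG, vecMul_one]
  have hdet : IsUnit (G + vecMulVec u v).det := by
    rw [det_add_vecMulVec hG]
    exact hG.mul (IsUnit.of_mul_eq_one_right γ hγ)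
  have hnum := add_smul_vecMulVec_mul_add_vecMulVec (B * G⁻¹) y hq
    (by rwa [← dotProduct_mulVec])
  rw [nonsing_inv_mul_cancel_right _ _ hG] at hnum
  rw [← hnum, mul_nonsing_inv_cancel_right _ _ hdet]

theorem dotProduct_inv_transpose_mul_self_mulVec (R : Matrix m m α) (x : m → α) :
    x ⬝ᵥ (Rᵀ * R)⁻¹ *ᵥ x = (Rᵀ⁻¹ *ᵥ x) ⬝ᵥ (Rᵀ⁻¹ *ᵥ x) := by
  rw [Matrix.mul_inv_rev, ← mulVec_mulVec, dotProduct_mulVec, ← mulVec_transpose,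
    transpose_nonsing_inv]

theorem one_add_dotProduct_inv_transpose_mul_self_mulVec_pos [LinearOrder α]
    [IsStrictOrderedRing α] (R : Matrix m m α) (x : m → α) :
    0 < 1 + x ⬝ᵥ (Rᵀ * R)⁻¹ *ᵥ x := by
  rw [dotProduct_inv_transpose_mul_self_mulVec]
  exact add_pos_of_pos_of_nonneg one_pos (Finset.sum_nonneg fun _ _ => mul_self_nonneg _)

end CommRing

theorem stmt12_general {K k l m n ι ι' : Type*} [Field K] [LinearOrder K] [IsStrictOrderedRing K]
    [Fintype k] [Fintype m] [DecidableEq m] [Fintype n]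
    [Fintype ι] [DecidableEq ι] [Unique ι] [Fintype ι']
    (X : Matrix m n K) (Y : Matrix l n K) (R : Matrix m m K) (hR : IsUnit R.det)
    (hXXt : X * Xᵀ = Rᵀ * R) (x : m → K) (y : l → K)
    (A : Matrix l m K) (hA : A = Y * Xᵀ * (Rᵀ * R)⁻¹)
    (p : m → K) (hp : p = R⁻¹ *ᵥ (Rᵀ⁻¹ *ᵥ x))
    (γ : K) (hγ : γ = 1 / (1 + x ⬝ᵥ p))
    (X₁ : Matrix m (n ⊕ ι) K) (hX₁ : X₁ = fromCols X (replicateCol ι x))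
    (Y₁ : Matrix l (n ⊕ ι) K) (hY₁ : Y₁ = fromCols Y (replicateCol ι y)) :
    Y₁ * X₁ᵀ * (X₁ * X₁ᵀ)⁻¹ = A + γ • vecMulVec (y - A *ᵥ x) p ∧
    X * Xᵀ + vecMulVec x x = X₁ * X₁ᵀ ∧
    ∀ U : Matrix (k ⊕ ι') (m ⊕ ι) K, Uᵀ * U = 1 →
      ∀ R' : Matrix k m K, U * fromRows R (replicateRow ι x) = fromRows R' 0 →
        R'ᵀ * R' = X * Xᵀ + vecMulVec x x := by
  have hG : IsUnit (Rᵀ * R).det := by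
    rw [det_mul, det_transpose]
    exact hR.mul hR
  have hp' : p = (Rᵀ * R)⁻¹ *ᵥ x := by rw [hp, mulVec_mulVec, Matrix.mul_inv_rev]
  have hγ' : γ * (1 + x ⬝ᵥ (Rᵀ * R)⁻¹ *ᵥ x) = 1 := by
    rw [hγ, hp']
    exact one_div_mul_cancel (one_add_dotProduct_inv_transpose_mul_self_mulVec_pos R x).ne'
  have hXX : X₁ * X₁ᵀ = X * Xᵀ + vecMulVec x x := by
    rw [hX₁, fromCols_replicateCol_mul_transpose]
  have hYX : Y₁ * X₁ᵀ = Y * Xᵀ + vecMulVec y x := by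
    rw [hX₁, hY₁, fromCols_replicateCol_mul_transpose]
  have hSymm : (Rᵀ * R)⁻¹.IsSymm := (isSymm_transpose_mul_self R).inv
  refine ⟨?_, hXX.symm, fun U hU R' hUR => ?_⟩
  · rw [hXX, hYX, hXXt, mul_inv_add_vecMulVec _ hG y x x hγ',
      vecMul_eq_mulVec_of_isSymm hSymm, ← hA, ← hp']
  · rw [hXXt, transpose_mul_self_of_isometry_mul_fromRows_replicateRow hU hUR]

/-- Cholesky-based online DMD update.  With `XXᵀ = RᵀR` (`R`
invertible), `A = (YXᵀ)(RᵀR)⁻¹`, `p = R⁻¹(R⁻ᵀx)`, `γ = 1/(1 + xᵀp)`,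
`X₁ = [X, x]`, `Y₁ = [Y, y]`:
(i) `(Y₁X₁ᵀ)(X₁X₁ᵀ)⁻¹ = A + γ(y − Ax)pᵀ`; and
(ii) if `U` is orthogonal with `U·[R; xᵀ] = [R'; 0ᵀ]`, then
`R'ᵀR' = XXᵀ + xxᵀ = X₁X₁ᵀ`. -/
theorem stmt12 {m n : ℕ}
    (X Y : Matrix (Fin m) (Fin n) ℝ)
    (R : Matrix (Fin m) (Fin m) ℝ) (hR : IsUnit R.det)
    (hXXt : X * Xᵀ = Rᵀ * R)
    (x y : Fin m → ℝ)
    (A : Matrix (Fin m) (Fin m) ℝ) (hA : A = Y * Xᵀ * (Rᵀ * R)⁻¹)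
    (p : Fin m → ℝ) (hp : p = R⁻¹.mulVec ((Rᵀ)⁻¹.mulVec x))
    (γ : ℝ) (hγ : γ = 1 / (1 + x ⬝ᵥ p))
    (X₁ : Matrix (Fin m) (Fin n ⊕ Fin 1) ℝ) (hX₁ : X₁ = Matrix.fromCols X (colv x))
    (Y₁ : Matrix (Fin m) (Fin n ⊕ Fin 1) ℝ) (hY₁ : Y₁ = Matrix.fromCols Y (colv y)) :
    Y₁ * X₁ᵀ * (X₁ * X₁ᵀ)⁻¹ = A + γ • Matrix.vecMulVec (y - A.mulVec x) p ∧
    ∀ (U : Matrix (Fin m ⊕ Fin 1) (Fin m ⊕ Fin 1) ℝ),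
      Uᵀ * U = 1 → U * Uᵀ = 1 →
      ∀ (R' : Matrix (Fin m) (Fin m) ℝ),
        U * Matrix.fromRows R (rowv x) = Matrix.fromRows R' 0 →
        R'ᵀ * R' = X * Xᵀ + Matrix.vecMulVec x x ∧
        X * Xᵀ + Matrix.vecMulVec x x = X₁ * X₁ᵀ := by
  obtain ⟨update, gram, factor⟩ :=
    stmt12_general (k := Fin m) (ι' := Fin 1) X Y R hR hXXt x y A hA p hp γ hγ X₁ hX₁ Y₁ hY₁
  exact ⟨update, fun U hU _ R' h => ⟨factor U hU R' h, gram⟩⟩
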